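/- Antipode–counital identities: for all b ∈ B, writing Δ(1) = 1₍₁₎ ⊗ 1₍₂₎, one has S(b₍₁₎) b₍₂₎ = 1₍₁₎ ε(b 1₍₂₎) and b₍₁₎ S(b₍₂₎) = ε(1₍₁₎ b) 1₍₂₎. -/

import Mathlib

/-!
Both identities are equalities in `B`, on which the trace `T` is non-degenerate
(`D2S.T_nondeg`), so it suffices to compare the values of `T` on their products with an
arbitrary element of `B`.

Testing turns every factor of a Sweedler sum into a functional on `B`, and every such functional
is the pairing with an explicit element of `A`. With `r = w⁻¹`, one has
`T(X b) = λ⁻¹ ⟨E_{M₁}(X r e₁ e₂), b⟩` (`D2H.T_eq_pr`) and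
`T(S(b) X) = λ⁻¹ ⟨r E_{M₁}(e₂ e₁ X), b⟩` (`D2H.T_S_eq_pr`), the latter being the definition of
the antipode. For the sums `T(S(b₍₁₎) b₍₂₎ Y)` and `T(X b₍₁₎ S(b₍₂₎))` the element of `A` that
represents the factor containing `S` still depends on the other leg; this dependence is pulled
out by expanding it in dual bases of `T` on `A`. After that
`⟨a₁, b₍₁₎⟩⟨a₂, b₍₂₎⟩ = ⟨a₁ a₂, b⟩` (`D2H.pr_mul`) evaluates the sum.

Two choices of these dual bases are used, each adapted to one of the sums. For `b₍₁₎ S(b₍₂₎)`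
they come from the tower `k ← V ← A` (`D2S.dual_A1`), with the conditional expectation
`E_B(c) = λ ∑ xᵢ c yᵢ` of `C` onto `B`, restricted to `A → V`; its dual bases are the Fourier
transforms of those of `E_{M₁}`. For `S(b₍₁₎) b₍₂₎` they come from the tower `k ← U ← A`
(`D2S.dual_A2`), with the expectation `E_M : A → U`; the dual bases of `T` on `U` are obtained
from those on `V` through the anti-isomorphism `V ≅ U`, `v e₁ = v̂ e₁`.

The results are `T(X b₍₁₎ S(b₍₂₎)) = λ⁻¹ T(X E_{M₁}(b e₂))` (`D2H.core2`) and
`T(S(b₍₁₎) b₍₂₎ Y) = λ⁻² T(e₁ Y e₁ e₂ w b r)` (`D2H.core1`). The right-hand sides of the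
identities, being Sweedler sums for `Δ(1)`, are evaluated to the same values by the
representation of `T(X ·)` alone (`D2H.rhs2`, `D2H.rhs1`).
-/

open scoped TensorProduct
open TensorProduct

/-- A symmetric Markov extension `N ⊆ M` of `k`-algebras satisfying the symmetric
product and weak irreducibility assumptions, together with its Jones tower
`N ⊆ M ⊆ M₁ ⊆ M₂` (the ambient algebra `R` plays the role of `M₂`), the
normalized trace `T = T₂` and the depth two conditions. -/
structure D2 (k : Type*) [Field k] (R : Type*) [Ring R] [Algebra k R] where
  N : Subalgebra k R
  M : Subalgebra k R
  M1 : Subalgebra k R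
  hNM : N ≤ M
  hMM1 : M ≤ M1
  E : R →ₗ[k] R
  EM : R →ₗ[k] R
  EM1 : R →ₗ[k] R
  lam : k
  lam_ne : lam ≠ 0
  e1 : R
  e2 : R
  T : R →ₗ[k] k
  -- Markov extension data for E : M → N
  nE : ℕ
  xb : Fin nE → R
  yb : Fin nE → R
  hxb : ∀ i, xb i ∈ M
  hyb : ∀ i, yb i ∈ M
  hE_mem : ∀ x ∈ M, E x ∈ N
  hE_one : E 1 = 1
  hE_left : ∀ n ∈ N, ∀ x ∈ M, E (n * x) = n * E x
  hE_right : ∀ n ∈ N, ∀ x ∈ M, E (x * n) = E x * n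
  hdual1 : ∀ m ∈ M, ∑ i, E (m * xb i) * yb i = m
  hdual2 : ∀ m ∈ M, ∑ i, xb i * E (yb i * m) = m
  hindex : ∑ i, xb i * yb i = lam⁻¹ • (1 : R)
  hindex' : ∑ i, yb i * xb i = lam⁻¹ • (1 : R)
  -- the normalized trace (T₂ on M₂ = R; it restricts to T on N, T₀ on M, T₁ on M₁)
  hT_one : T 1 = 1
  hT_tr : ∀ x y : R, T (x * y) = T (y * x)
  hTE : ∀ x ∈ M, T (E x) = T x
  hTEM : ∀ x ∈ M1, T (EM x) = T x
  hTEM1 : ∀ x : R, T (EM1 x) = T x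
  -- symmetry of the Markov extension: E u = u E for all u ∈ U = C_M(N)
  hsymm : ∀ u ∈ M, (∀ y ∈ N, u * y = y * u) → ∀ x ∈ M, E (u * x) = E (x * u)
  -- the basic construction M₁ = M e₁ M
  he1_mem : e1 ∈ M1
  he1_idem : e1 * e1 = e1
  he1_N : ∀ y ∈ N, e1 * y = y * e1
  hM1_gen : M1.toSubmodule = Submodule.span k {z : R | ∃ m ∈ M, ∃ m' ∈ M, z = m * e1 * m'}
  hEM_mem : ∀ x ∈ M1, EM x ∈ M
  hEM_one : EM 1 = 1
  hEM_left : ∀ m ∈ M, ∀ x ∈ M1, EM (m * x) = m * EM x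
  hEM_right : ∀ m ∈ M, ∀ x ∈ M1, EM (x * m) = EM x * m
  hEM_e1 : ∀ m ∈ M, ∀ m' ∈ M, EM (m * e1 * m') = lam • (m * m')
  he1_jones : ∀ x ∈ M, e1 * x * e1 = e1 * E x
  he1_jones' : ∀ x ∈ M, e1 * E x = E x * e1
  -- the iterated basic construction M₂ = M₁ e₂ M₁ (M₂ = R is the ambient algebra)
  he2_idem : e2 * e2 = e2
  he2_M : ∀ m ∈ M, e2 * m = m * e2
  hM2_gen : (⊤ : Submodule k R) = Submodule.span k {z : R | ∃ x ∈ M1, ∃ y ∈ M1, z = x * e2 * y}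
  hEM1_mem : ∀ x : R, EM1 x ∈ M1
  hEM1_one : EM1 1 = 1
  hEM1_left : ∀ m ∈ M1, ∀ x : R, EM1 (m * x) = m * EM1 x
  hEM1_right : ∀ m ∈ M1, ∀ x : R, EM1 (x * m) = EM1 x * m
  hEM1_e2 : ∀ x ∈ M1, ∀ y ∈ M1, EM1 (x * e2 * y) = lam • (x * y)
  he2_jones : ∀ x ∈ M1, e2 * x * e2 = e2 * EM x
  he2_jones' : ∀ x ∈ M1, e2 * EM x = EM x * e2
  -- braid-like relations and Pimsner-Popa relations
  hbraid1 : e1 * e2 * e1 = lam • e1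
  hbraid2 : e2 * e1 * e2 = lam • e2
  hPP1 : ∀ x ∈ M1, x * e1 = lam⁻¹ • (EM (x * e1) * e1)
  hPP1' : ∀ x ∈ M1, e1 * x = lam⁻¹ • (e1 * EM (e1 * x))
  hPP2 : ∀ x : R, x * e2 = lam⁻¹ • (EM1 (x * e2) * e2)
  hPP2' : ∀ x : R, e2 * x = lam⁻¹ • (e2 * EM1 (e2 * x))
  -- weak irreducibility: U = C_M(N) is Kanzaki separable with symmetric
  -- separability element ∑ sp i ⊗ sq i, and T₀ = T|U is non-degenerate on U
  nS : ℕ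
  sp : Fin nS → R
  sq : Fin nS → R
  hsp : ∀ i, sp i ∈ M ∧ ∀ y ∈ N, sp i * y = y * sp i
  hsq : ∀ i, sq i ∈ M ∧ ∀ y ∈ N, sq i * y = y * sq i
  hsep_one : ∑ i, sp i * sq i = 1
  hsep_cas : ∀ u ∈ M, (∀ y ∈ N, u * y = y * u) →
      ∑ i, (u * sp i) ⊗ₜ[k] sq i = ∑ i, sp i ⊗ₜ[k] (sq i * u)
  hsep_symm : ∑ i, sp i ⊗ₜ[k] sq i = ∑ i, sq i ⊗ₜ[k] sp i
  hU_nondeg : ∀ u ∈ M, (∀ y ∈ N, u * y = y * u) →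
      (∀ u' ∈ M, (∀ y ∈ N, u' * y = y * u') → T (u * u') = 0) → u = 0
  -- depth two conditions
  nA : ℕ
  zb : Fin nA → R
  wb : Fin nA → R
  hzb : ∀ j, zb j ∈ M1 ∧ ∀ y ∈ N, zb j * y = y * zb j
  hwb : ∀ j, wb j ∈ M1 ∧ ∀ y ∈ N, wb j * y = y * wb j
  hdualA1 : ∀ x ∈ M1, ∑ j, EM (x * zb j) * wb j = x
  hdualA2 : ∀ x ∈ M1, ∑ j, zb j * EM (wb j * x) = x
  nB : ℕ
  ub : Fin nB → R
  vb : Fin nB → R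
  hub : ∀ i, ∀ y ∈ M, ub i * y = y * ub i
  hvb : ∀ i, ∀ y ∈ M, vb i * y = y * vb i
  hdualB1 : ∀ x : R, ∑ i, EM1 (x * ub i) * vb i = x
  hdualB2 : ∀ x : R, ∑ i, ub i * EM1 (vb i * x) = x

namespace D2

variable {k : Type*} [Field k] {R : Type*} [Ring R] [Algebra k R]

/-- `U = C_M(N)`. -/
def U (D : D2 k R) : Subalgebra k R := D.M ⊓ Subalgebra.centralizer k (D.N : Set R)

/-- `V = C_{M₁}(M)`. -/
def V (D : D2 k R) : Subalgebra k R := D.M1 ⊓ Subalgebra.centralizer k (D.M : Set R)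

/-- `W = C_{M₂}(M₁)`. -/
def W (D : D2 k R) : Subalgebra k R := Subalgebra.centralizer k (D.M1 : Set R)

/-- `A = C_{M₁}(N)`. -/
def A (D : D2 k R) : Subalgebra k R := D.M1 ⊓ Subalgebra.centralizer k (D.N : Set R)

/-- `B = C_{M₂}(M)`. -/
def B (D : D2 k R) : Subalgebra k R := Subalgebra.centralizer k (D.M : Set R)

/-- `C = C_{M₂}(N)`. -/
def C (D : D2 k R) : Subalgebra k R := Subalgebra.centralizer k (D.N : Set R)

end D2
/-- Extension of the depth two setting by the symmetric separability element
`f = ∑ f1 i ⊗ f2 i` of `V = C_{M₁}(M)` and the invertible central element `w` of `V`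
such that `f⁽¹⁾ ⊗ w f⁽²⁾` is the dual bases tensor of the trace `T` on `V`. -/
structure D2S (k : Type*) [Field k] (R : Type*) [Ring R] [Algebra k R] extends D2 k R where
  nV : ℕ
  f1 : Fin nV → R
  f2 : Fin nV → R
  hf1 : ∀ i, f1 i ∈ M1 ∧ ∀ y ∈ M, f1 i * y = y * f1 i
  hf2 : ∀ i, f2 i ∈ M1 ∧ ∀ y ∈ M, f2 i * y = y * f2 i
  hf_one : ∑ i, f1 i * f2 i = 1
  hf_cas : ∀ v ∈ M1, (∀ y ∈ M, v * y = y * v) →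
      ∑ i, (v * f1 i) ⊗ₜ[k] f2 i = ∑ i, f1 i ⊗ₜ[k] (f2 i * v)
  hf_symm : ∑ i, f1 i ⊗ₜ[k] f2 i = ∑ i, f2 i ⊗ₜ[k] f1 i
  w : R
  winv : R
  hw_mem : w ∈ M1 ∧ ∀ y ∈ M, w * y = y * w
  hwinv_mem : winv ∈ M1 ∧ ∀ y ∈ M, winv * y = y * winv
  hw_inv : w * winv = 1 ∧ winv * w = 1
  hw_central : ∀ v ∈ M1, (∀ y ∈ M, v * y = y * v) → w * v = v * w
  hw_def : w * (∑ i, T (f2 i) • f1 i) = 1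
  hw_dual : ∀ v ∈ M1, (∀ y ∈ M, v * y = y * v) → ∑ i, T (v * (w * f2 i)) • f1 i = v
/-- Extension of the depth two setting by the comultiplication `Δ`, the counit
(given by `ε(b) = ⟨1, b⟩`) and the antipode `S` on `B = C_{M₂}(M)`, characterized
through the non-degenerate pairing `⟨a, b⟩ = λ⁻² T(a e₂ e₁ w b)` of `A` and `B`. -/
structure D2H (k : Type*) [Field k] (R : Type*) [Ring R] [Algebra k R] extends D2S k R where
  Δ : R →ₗ[k] R ⊗[k] R
  S : R →ₗ[k] R
  hΔ_mem : ∀ b, (∀ y ∈ M, b * y = y * b) →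
      Δ b ∈ Submodule.span k {z : R ⊗[k] R |
        ∃ b1, (∀ y ∈ M, b1 * y = y * b1) ∧ ∃ b2, (∀ y ∈ M, b2 * y = y * b2) ∧
          z = b1 ⊗ₜ[k] b2}
  hΔ_def : ∀ a1 ∈ M1, (∀ y ∈ N, a1 * y = y * a1) →
    ∀ a2 ∈ M1, (∀ y ∈ N, a2 * y = y * a2) →
    ∀ b, (∀ y ∈ M, b * y = y * b) →
    ∀ (m : ℕ) (b1 b2 : Fin m → R), Δ b = ∑ i, b1 i ⊗ₜ[k] b2 i →
      ∑ i, (lam⁻¹ ^ 2 * T (a1 * e2 * e1 * w * b1 i)) *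
          (lam⁻¹ ^ 2 * T (a2 * e2 * e1 * w * b2 i))
        = lam⁻¹ ^ 2 * T (a1 * a2 * e2 * e1 * w * b)
  hS_mem : ∀ b, (∀ y ∈ M, b * y = y * b) → ∀ y ∈ M, S b * y = y * S b
  hS_bijOn : Set.BijOn S {b : R | ∀ y ∈ M, b * y = y * b} {b : R | ∀ y ∈ M, b * y = y * b}
  hS_def : ∀ a ∈ M1, (∀ y ∈ N, a * y = y * a) →
    ∀ b, (∀ y ∈ M, b * y = y * b) →
      lam⁻¹ ^ 2 * T (a * e2 * e1 * w * b) = lam⁻¹ ^ 2 * T (S b * e1 * e2 * w * a)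

namespace D2H

variable {k : Type*} [Field k] {R : Type*} [Ring R] [Algebra k R]

/-- The duality pairing `⟨a, b⟩ = λ⁻² T(a e₂ e₁ w b)`. -/
def pr (D : D2H k R) (a b : R) : k := D.lam⁻¹ ^ 2 * D.T (a * D.e2 * D.e1 * D.w * b)

/-- The counit `ε(b) = ⟨1, b⟩`. -/
def eps (D : D2H k R) (b : R) : k := D.pr 1 b

end D2H

/-! ### The conditional expectations of the tower on centralizers -/

namespace D2

variable {k : Type*} [Field k] {R : Type*} [Ring R] [Algebra k R]

theorem mem_B {D : D2 k R} {b : R} : b ∈ D.B ↔ ∀ y ∈ D.M, b * y = y * b :=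
  ⟨fun h y hy => (Subalgebra.mem_centralizer_iff k |>.1 h y hy).symm,
    fun h => Subalgebra.mem_centralizer_iff k |>.2 fun y hy => (h y hy).symm⟩

theorem mem_C {D : D2 k R} {c : R} : c ∈ D.C ↔ ∀ y ∈ D.N, c * y = y * c :=
  ⟨fun h y hy => (Subalgebra.mem_centralizer_iff k |>.1 h y hy).symm,
    fun h => Subalgebra.mem_centralizer_iff k |>.2 fun y hy => (h y hy).symm⟩

theorem mem_A {D : D2 k R} {a : R} : a ∈ D.A ↔ a ∈ D.M1 ∧ a ∈ D.C := Iff.rfl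

theorem mem_V {D : D2 k R} {a : R} : a ∈ D.V ↔ a ∈ D.M1 ∧ a ∈ D.B := Iff.rfl

theorem mem_U {D : D2 k R} {a : R} : a ∈ D.U ↔ a ∈ D.M ∧ a ∈ D.C := Iff.rfl

variable (D : D2 k R)

theorem B_le_C {b : R} (hb : b ∈ D.B) : b ∈ D.C :=
  mem_C.2 fun y hy => mem_B.1 hb y (D.hNM hy)

theorem V_le_A {v : R} (hv : v ∈ D.V) : v ∈ D.A := ⟨hv.1, D.B_le_C hv.2⟩

theorem U_le_A {u : R} (hu : u ∈ D.U) : u ∈ D.A := ⟨D.hMM1 hu.1, hu.2⟩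

theorem e1_mem_A : D.e1 ∈ D.A := ⟨D.he1_mem, mem_C.2 D.he1_N⟩

theorem e2_mem_B : D.e2 ∈ D.B := mem_B.2 D.he2_M

theorem e1_mem_C : D.e1 ∈ D.C := D.e1_mem_A.2

theorem e2_mem_C : D.e2 ∈ D.C := D.B_le_C D.e2_mem_B

theorem EM1_mem_A {c : R} (hc : c ∈ D.C) : D.EM1 c ∈ D.A := by
  refine ⟨D.hEM1_mem c, mem_C.2 fun y hy => ?_⟩
  have hy1 := D.hMM1 (D.hNM hy)
  rw [← D.hEM1_right y hy1, ← D.hEM1_left y hy1, mem_C.1 hc y hy]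

theorem EM1_mem_V {b : R} (hb : b ∈ D.B) : D.EM1 b ∈ D.V := by
  refine ⟨D.hEM1_mem b, mem_B.2 fun y hy => ?_⟩
  have hy1 := D.hMM1 hy
  rw [← D.hEM1_right y hy1, ← D.hEM1_left y hy1, mem_B.1 hb y hy]

theorem EM_mem_U {a : R} (ha : a ∈ D.A) : D.EM a ∈ D.U := by
  refine ⟨D.hEM_mem a ha.1, mem_C.2 fun y hy => ?_⟩
  have hy1 := D.hNM hy
  rw [← D.hEM_right y hy1 a ha.1, ← D.hEM_left y hy1 a ha.1, mem_C.1 ha.2 y hy]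

theorem EM1_mul_e2 (x : R) : D.EM1 (x * D.e2) * D.e2 = D.lam • (x * D.e2) := by
  rw [D.hPP2 x, smul_smul, mul_inv_cancel₀ D.lam_ne, one_smul, ← D.hPP2 x]

theorem e2_mul_EM1 (x : R) : D.e2 * D.EM1 (D.e2 * x) = D.lam • (D.e2 * x) := by
  rw [D.hPP2' x, smul_smul, mul_inv_cancel₀ D.lam_ne, one_smul, ← D.hPP2' x]

theorem EM_mul_e1 {x : R} (hx : x ∈ D.M1) :
    D.EM (x * D.e1) * D.e1 = D.lam • (x * D.e1) := by
  rw [D.hPP1 x hx, smul_smul, mul_inv_cancel₀ D.lam_ne, one_smul, ← D.hPP1 x hx]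

theorem EM1_e2 : D.EM1 D.e2 = D.lam • (1 : R) := by
  simpa using D.hEM1_e2 1 (one_mem _) 1 (one_mem _)

theorem EM_e1' {m : R} (hm : m ∈ D.M) : D.EM (m * D.e1) = D.lam • m := by
  simpa using D.hEM_e1 m hm 1 (one_mem _)

theorem T_mul_EM1 {x : R} (hx : x ∈ D.M1) (y : R) : D.T (x * D.EM1 y) = D.T (x * y) := by
  rw [← D.hEM1_left x hx, D.hTEM1]

theorem T_EM1_mul {x : R} (hx : x ∈ D.M1) (y : R) : D.T (D.EM1 y * x) = D.T (y * x) := by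
  rw [← D.hEM1_right x hx, D.hTEM1]

/-- `∑ xᵢ e₁ yᵢ` acts as the identity on `M₁ = M e₁ M`. -/
theorem sum_x_e1_y : ∑ i, D.xb i * D.e1 * D.yb i = 1 := by
  have key : ∀ z ∈ D.M1, (∑ i, D.xb i * D.e1 * D.yb i) * z = z := by
    intro z hz
    have hz' : z ∈ D.M1.toSubmodule := hz
    rw [D.hM1_gen] at hz'
    induction hz' using Submodule.span_induction with
    | mem z h =>
      obtain ⟨m, hm, m', hm', rfl⟩ := h
      have : ∀ i, D.xb i * D.e1 * D.yb i * (m * D.e1 * m')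
          = D.xb i * D.E (D.yb i * m) * (D.e1 * m') := by
        intro i
        have h1 := D.he1_jones (D.yb i * m) (mul_mem (D.hyb i) hm)
        have h2 := D.he1_jones' (D.yb i * m) (mul_mem (D.hyb i) hm)
        calc _ = D.xb i * (D.e1 * (D.yb i * m) * D.e1) * m' := by simp only [mul_assoc]
          _ = _ := by rw [h1, h2]; simp only [mul_assoc]
      rw [Finset.sum_mul, Finset.sum_congr rfl fun i _ => this i, ← Finset.sum_mul,
        D.hdual2 m hm, mul_assoc]
    | zero => simp
    | add x y hx hy h1 h2 =>
      have hx' : x ∈ D.M1 := by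
        have : x ∈ D.M1.toSubmodule := by rw [D.hM1_gen]; exact hx
        exact this
      have hy' : y ∈ D.M1 := by
        have : y ∈ D.M1.toSubmodule := by rw [D.hM1_gen]; exact hy
        exact this
      rw [mul_add, h1 hx', h2 hy']
    | smul c x hx h1 =>
      have hx' : x ∈ D.M1 := by
        have : x ∈ D.M1.toSubmodule := by rw [D.hM1_gen]; exact hx
        exact this
      rw [mul_smul_comm, h1 hx']
  simpa using key 1 (one_mem _)

/-! ### The conditional expectation `E_B` -/

/-- The conditional expectation `E_B(c) = λ ∑ xᵢ c yᵢ`, which maps `C` onto `B` and `A` onto `V`;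
it is defined on the whole of `R` for convenience. -/
noncomputable def EB (c : R) : R := D.lam • ∑ i, D.xb i * c * D.yb i

theorem EB_mem {c : R} (hc : c ∈ D.C) : D.EB c ∈ D.B := by
  refine Subalgebra.smul_mem _ (mem_B.2 fun y hy => ?_) _
  -- both sides equal the double sum `∑ xⱼ c E(yⱼ y xᵢ) yᵢ`
  have h1 : ∀ i, y * (D.xb i * c * D.yb i)
      = ∑ j, D.xb j * c * (D.E (D.yb j * y * D.xb i) * D.yb i) := by
    intro i
    have h := D.hdual2 (y * D.xb i) (mul_mem hy (D.hxb i))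
    calc y * (D.xb i * c * D.yb i) = (y * D.xb i) * (c * D.yb i) := by simp only [mul_assoc]
      _ = (∑ j, D.xb j * D.E (D.yb j * (y * D.xb i))) * (c * D.yb i) := by rw [h]
      _ = _ := by
        rw [Finset.sum_mul]
        refine Finset.sum_congr rfl fun j _ => ?_
        have hc' := mem_C.1 hc (D.E (D.yb j * y * D.xb i))
          (D.hE_mem _ (mul_mem (mul_mem (D.hyb j) hy) (D.hxb i)))
        simp only [mul_assoc] at hc' ⊢
        rw [← mul_assoc (D.E _) c, ← hc']
        simp only [mul_assoc]
  rw [Finset.mul_sum, Finset.sum_congr rfl fun i _ => h1 i, Finset.sum_comm, Finset.sum_mul]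
  refine Finset.sum_congr rfl fun j _ => ?_
  rw [← Finset.mul_sum, D.hdual1 (D.yb j * y) (mul_mem (D.hyb j) hy)]
  simp only [mul_assoc]

theorem EB_mul {c b : R} (hb : b ∈ D.B) : D.EB (c * b) = D.EB c * b := by
  simp only [EB, smul_mul_assoc, Finset.sum_mul]
  congr 1
  refine Finset.sum_congr rfl fun i _ => ?_
  rw [mul_assoc _ _ b, ← mem_B.1 hb _ (D.hyb i)]
  simp only [mul_assoc]

theorem mul_EB {c b : R} (hb : b ∈ D.B) : D.EB (b * c) = b * D.EB c := by
  simp only [EB, mul_smul_comm, Finset.mul_sum]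
  congr 1
  refine Finset.sum_congr rfl fun i _ => ?_
  rw [← mul_assoc, ← mul_assoc, ← mul_assoc, mem_B.1 hb _ (D.hxb i)]

/-- `E_B` preserves the trace; this uses the symmetric product assumption `∑ yᵢ xᵢ = λ⁻¹`. -/
theorem T_EB (c : R) {b : R} (hb : b ∈ D.B) : D.T (D.EB c * b) = D.T (c * b) := by
  have h : ∀ i, D.T (D.xb i * (c * b) * D.yb i) = D.T (c * b * (D.yb i * D.xb i)) := by
    intro i
    rw [mul_assoc, D.hT_tr, mul_assoc (c * b)]
  rw [← D.EB_mul hb, EB, map_smul, map_sum, Finset.sum_congr rfl fun i _ => h i, ← map_sum,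
    ← Finset.mul_sum, D.hindex', mul_smul_comm, mul_one, map_smul, smul_smul,
    mul_inv_cancel₀ D.lam_ne, one_smul]

theorem T_mul_EB (c : R) {b : R} (hb : b ∈ D.B) : D.T (b * D.EB c) = D.T (b * c) := by
  rw [D.hT_tr, D.T_EB c hb, D.hT_tr]

theorem EB_e1 : D.EB D.e1 = D.lam • (1 : R) := by rw [EB, D.sum_x_e1_y]

theorem T_e1_mul {b : R} (hb : b ∈ D.B) : D.T (D.e1 * b) = D.lam * D.T b := by
  rw [← D.T_EB _ hb, D.EB_e1, smul_mul_assoc, one_mul, map_smul, smul_eq_mul]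

theorem T_mul_e1 {b : R} (hb : b ∈ D.B) : D.T (b * D.e1) = D.lam * D.T b := by
  rw [D.hT_tr, D.T_e1_mul hb]

/-- A Pimsner-Popa relation for `E_B` and `e₁`. -/
theorem EB_mul_e1 {c : R} (hc : c ∈ D.C) : D.EB (c * D.e1) * D.e1 = D.lam • (c * D.e1) := by
  have h : ∀ i, D.xb i * (c * D.e1) * D.yb i * D.e1 = D.xb i * D.E (D.yb i * 1) * (c * D.e1) := by
    intro i
    have h1 := D.he1_jones _ (D.hyb i)
    have h2 := D.he1_jones' _ (D.hyb i)
    have h3 := mem_C.1 hc _ (D.hE_mem _ (D.hyb i))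
    calc _ = D.xb i * c * (D.e1 * D.yb i * D.e1) := by simp only [mul_assoc]
      _ = D.xb i * (c * D.E (D.yb i)) * D.e1 := by rw [h1, h2]; simp only [mul_assoc]
      _ = _ := by rw [h3, mul_one]; simp only [mul_assoc]
  rw [EB, smul_mul_assoc, Finset.sum_mul, Finset.sum_congr rfl fun i _ => h i, ← Finset.sum_mul,
    D.hdual2 1 (one_mem _), one_mul]

theorem e1_mul_EB {c : R} (hc : c ∈ D.C) : D.e1 * D.EB (D.e1 * c) = D.lam • (D.e1 * c) := by
  have h : ∀ i, D.e1 * (D.xb i * (D.e1 * c) * D.yb i) = D.e1 * c * (D.E (1 * D.xb i) * D.yb i) := by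
    intro i
    have h1 := D.he1_jones _ (D.hxb i)
    have h3 := mem_C.1 hc _ (D.hE_mem _ (D.hxb i))
    calc _ = (D.e1 * D.xb i * D.e1) * (c * D.yb i) := by simp only [mul_assoc]
      _ = D.e1 * (D.E (D.xb i) * c) * D.yb i := by rw [h1]; simp only [mul_assoc]
      _ = _ := by rw [← h3, one_mul]; simp only [mul_assoc]
  rw [EB, mul_smul_comm, Finset.mul_sum, Finset.sum_congr rfl fun i _ => h i, ← Finset.mul_sum,
    D.hdual1 1 (one_mem _), mul_one]

theorem EB_EM1 (c : R) : D.EB (D.EM1 c) = D.EM1 (D.EB c) := by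
  simp only [EB, map_smul, map_sum]
  congr 1
  refine Finset.sum_congr rfl fun i _ => ?_
  rw [D.hEM1_right _ (D.hMM1 (D.hyb i)), D.hEM1_left _ (D.hMM1 (D.hxb i))]

theorem EB_mem_V {a : R} (ha : a ∈ D.A) : D.EB a ∈ D.V :=
  ⟨Subalgebra.smul_mem _ (sum_mem fun i _ =>
    mul_mem (mul_mem (D.hMM1 (D.hxb i)) ha.1) (D.hMM1 (D.hyb i))) _, D.EB_mem ha.2⟩

/-! ### The anti-isomorphism of `V` and `U` -/

/-- The anti-isomorphism `V → U`, `v ↦ λ⁻¹ E_M(v e₁)`, characterized by `v e₁ = v̂ e₁`. -/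
noncomputable def hat (v : R) : R := D.lam⁻¹ • D.EM (v * D.e1)

theorem hat_mem {v : R} (hv : v ∈ D.V) : D.hat v ∈ D.U :=
  Subalgebra.smul_mem _ (D.EM_mem_U (mul_mem (D.V_le_A hv) D.e1_mem_A)) _

theorem hat_mul_e1 {v : R} (hv : v ∈ D.M1) : D.hat v * D.e1 = v * D.e1 := by
  rw [hat, smul_mul_assoc, ← D.hPP1 v hv]

/-- The inverse `u ↦ λ⁻¹ E_B(u e₁)` of the map `v ↦ v̂`. The second identity is where the
symmetry `E(u x) = E(x u)` of the Markov extension enters. -/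
theorem unhat {u : R} (hu : u ∈ D.U) :
    (D.lam⁻¹ • D.EB (u * D.e1)) * D.e1 = u * D.e1 ∧
    D.e1 * (D.lam⁻¹ • D.EB (u * D.e1)) = D.e1 * u := by
  constructor
  · rw [smul_mul_assoc, D.EB_mul_e1 hu.2, smul_smul, inv_mul_cancel₀ D.lam_ne, one_smul]
  · rw [EB, smul_smul, inv_mul_cancel₀ D.lam_ne, one_smul, Finset.mul_sum]
    have h : ∀ i, D.e1 * (D.xb i * (u * D.e1) * D.yb i) = D.e1 * (D.E (u * D.xb i) * D.yb i) := by
      intro i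
      rw [D.hsymm u hu.1 (mem_C.1 hu.2) _ (D.hxb i), ← mul_assoc D.e1 (D.E _),
        ← D.he1_jones _ (mul_mem (D.hxb i) hu.1)]
      simp only [mul_assoc]
    rw [Finset.sum_congr rfl fun i _ => h i, ← Finset.mul_sum, D.hdual1 u hu.1]

theorem unhat_mem {u : R} (hu : u ∈ D.U) : D.lam⁻¹ • D.EB (u * D.e1) ∈ D.V :=
  Subalgebra.smul_mem _ (D.EB_mem_V (mul_mem (D.U_le_A hu) D.e1_mem_A)) _

theorem hat_unhat {u : R} (hu : u ∈ D.U) : D.hat (D.lam⁻¹ • D.EB (u * D.e1)) = u := by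
  rw [hat, (D.unhat hu).1, D.EM_e1' hu.1, smul_smul, inv_mul_cancel₀ D.lam_ne, one_smul]

theorem unhat_hat {v : R} (hv : v ∈ D.V) : D.lam⁻¹ • D.EB (D.hat v * D.e1) = v := by
  rw [D.hat_mul_e1 hv.1, D.mul_EB hv.2, D.EB_e1, mul_smul_comm, mul_one, smul_smul,
    inv_mul_cancel₀ D.lam_ne, one_smul]

theorem e1_mul_hat {v : R} (hv : v ∈ D.V) : D.e1 * D.hat v = D.e1 * v := by
  rw [← (D.unhat (D.hat_mem hv)).2, D.unhat_hat hv]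

theorem hat_mul {v v' : R} (hv : v ∈ D.V) (hv' : v' ∈ D.V) :
    D.hat (v * v') = D.hat v' * D.hat v := by
  have h : v * v' * D.e1 = D.hat v' * (D.hat v * D.e1) := by
    rw [D.hat_mul_e1 hv.1, ← mul_assoc, ← mem_B.1 hv.2 _ (D.hat_mem hv').1, mul_assoc, mul_assoc,
      D.hat_mul_e1 hv'.1]
  rw [hat, h, ← mul_assoc, D.EM_e1' (mul_mem (D.hat_mem hv').1 (D.hat_mem hv).1), smul_smul,
    inv_mul_cancel₀ D.lam_ne, one_smul]

theorem hat_one : D.hat 1 = 1 := by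
  have := D.EM_e1' (one_mem D.M)
  rw [hat, this, smul_smul, inv_mul_cancel₀ D.lam_ne, one_smul]

theorem T_hat {v : R} (hv : v ∈ D.V) : D.T (D.hat v) = D.T v := by
  refine mul_left_cancel₀ D.lam_ne ?_
  rw [← D.T_mul_e1 hv.2, ← D.hat_mul_e1 hv.1,
    ← D.hTEM _ (mul_mem (D.hMM1 (D.hat_mem hv).1) D.he1_mem), D.EM_e1' (D.hat_mem hv).1, map_smul,
    smul_eq_mul]

/-! ### Dual bases of `E_B : A → V` and of `E_M` -/

/-- Left half of the dual bases `γⱼ, δⱼ` of `E_B : A → V`; they are the Fourier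
transforms of the dual bases `uⱼ, vⱼ` of `E_{M₁} : B → V`. -/
noncomputable def gam (j : Fin D.nB) : R := (D.lam⁻¹ ^ 3) • D.EM1 (D.e2 * D.e1 * D.ub j)

/-- Right half of the dual bases `γⱼ, δⱼ` of `E_B : A → V`. -/
noncomputable def del (j : Fin D.nB) : R := D.EM1 (D.vb j * D.e1 * D.e2)

theorem ub_mem (j) : D.ub j ∈ D.B := mem_B.2 (D.hub j)

theorem vb_mem (j) : D.vb j ∈ D.B := mem_B.2 (D.hvb j)

theorem gam_mem (j) : D.gam j ∈ D.A :=
  Subalgebra.smul_mem _ (D.EM1_mem_A (mul_mem (mul_mem D.e2_mem_C D.e1_mem_C)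
    (D.B_le_C (D.ub_mem j)))) _

theorem del_mem (j) : D.del j ∈ D.A :=
  D.EM1_mem_A (mul_mem (mul_mem (D.B_le_C (D.vb_mem j)) D.e1_mem_C) D.e2_mem_C)

theorem EB_smul (c : k) (x : R) : D.EB (c • x) = c • D.EB x := by
  simp only [EB, mul_smul_comm, smul_mul_assoc, ← Finset.smul_sum, smul_comm c]

/-- The dual bases property: after `E_B(a e₂ e₁) e₁ = λ a e₂ e₁` it becomes that of
`E_{M₁}`. -/
theorem sum_EB_gam_del {a : R} (ha : a ∈ D.A) : ∑ j, D.EB (a * D.gam j) * D.del j = a := by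
  have hl := D.lam_ne
  set b := D.EB (a * D.e2 * D.e1) with hb
  have h1 : ∀ j, D.EB (a * D.gam j) * D.del j
      = (D.lam⁻¹ ^ 3) • D.EM1 (D.EM1 (b * D.ub j) * D.vb j * (D.e1 * D.e2)) := by
    intro j
    rw [gam, mul_smul_comm, EB_smul, smul_mul_assoc, ← D.hEM1_left _ ha.1, EB_EM1, del,
      ← D.hEM1_left _ (D.hEM1_mem _)]
    have : a * (D.e2 * D.e1 * D.ub j) = a * D.e2 * D.e1 * D.ub j := by simp only [mul_assoc]
    rw [this, D.EB_mul (D.ub_mem j)]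
    simp only [mul_assoc, hb]
  have hbe : b * D.e1 = D.lam • (a * D.e2 * D.e1) :=
    D.EB_mul_e1 (mul_mem ha.2 D.e2_mem_C)
  rw [Finset.sum_congr rfl fun j _ => h1 j, ← Finset.smul_sum, ← map_sum, ← Finset.sum_mul,
    D.hdualB1, ← mul_assoc, hbe, smul_mul_assoc]
  have : a * D.e2 * D.e1 * D.e2 = D.lam • (a * D.e2) := by
    rw [mul_assoc, mul_assoc, ← mul_assoc D.e2, D.hbraid2, mul_smul_comm]
  rw [this, map_smul, map_smul, D.hEM1_left a ha.1, D.EM1_e2]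
  simp only [smul_smul, mul_smul_comm, mul_one]
  field_simp
  simp

theorem sum_gam_del {x : R} (hx : x ∈ D.M) :
    ∑ j, D.gam j * x * D.del j = D.lam⁻¹ • D.E x := by
  have hl := D.lam_ne
  have h1 : ∀ j, D.gam j * x * D.del j = (D.lam⁻¹ ^ 3) •
      D.EM1 (D.EM1 (D.e2 * D.e1 * x * D.ub j) * D.vb j * (D.e1 * D.e2)) := by
    intro j
    have hx1 := D.hMM1 hx
    rw [gam, smul_mul_assoc, smul_mul_assoc, ← D.hEM1_right x hx1, del,
      ← D.hEM1_left _ (D.hEM1_mem _), mul_assoc (D.e2 * D.e1) _ x, D.hub j x hx]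
    simp only [mul_assoc]
  have hE : D.E x ∈ D.M := D.hNM (D.hE_mem x hx)
  have h2 : D.e2 * D.e1 * x * (D.e1 * D.e2) = D.lam • (D.e2 * D.E x) := by
    calc _ = D.e2 * (D.e1 * x * D.e1) * D.e2 := by simp only [mul_assoc]
      _ = D.e2 * D.e1 * (D.e2 * D.E x) := by
        rw [D.he1_jones x hx, D.he2_M _ hE]; simp only [mul_assoc]
      _ = _ := by rw [← mul_assoc, D.hbraid2, smul_mul_assoc]
  rw [Finset.sum_congr rfl fun j _ => h1 j, ← Finset.smul_sum, ← map_sum, ← Finset.sum_mul,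
    D.hdualB1, h2, map_smul, D.hEM1_right _ (D.hMM1 hE), D.EM1_e2]
  simp only [smul_smul, smul_mul_assoc, one_mul]
  congr 1
  field_simp

/-- The dual bases tensor of `E_M` may be replaced by `λ⁻¹ xᵢ e₁ ⊗ e₁ yᵢ` around any element
of `B`, because both represent the same tensor over `M`. -/
theorem sum_z_w {Y : R} (hY : Y ∈ D.B) :
    ∑ j, D.zb j * Y * D.wb j = (D.lam⁻¹ ^ 2) • D.EB (D.e1 * Y * D.e1) := by
  have hl := D.lam_ne
  have h1 : ∀ j, D.wb j = ∑ i, D.lam⁻¹ • (D.EM (D.wb j * (D.xb i * D.e1)) * D.e1 * D.yb i) := by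
    intro j
    conv_lhs => rw [← mul_one (D.wb j), ← D.sum_x_e1_y, Finset.mul_sum]
    refine Finset.sum_congr rfl fun i _ => ?_
    have := D.hPP1 (D.wb j * D.xb i) (mul_mem (D.hwb j).1 (D.hMM1 (D.hxb i)))
    rw [← mul_assoc, ← mul_assoc]
    conv_lhs => rw [this]
    rw [smul_mul_assoc, mul_assoc (D.wb j)]
  have h2 : ∀ j, D.zb j * Y * D.wb j
      = ∑ i, D.lam⁻¹ • (D.zb j * D.EM (D.wb j * (D.xb i * D.e1)) * (Y * D.e1 * D.yb i)) := by
    intro j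
    conv_lhs => rw [h1 j, Finset.mul_sum]
    refine Finset.sum_congr rfl fun i _ => ?_
    have hm : D.EM (D.wb j * (D.xb i * D.e1)) ∈ D.M := D.hEM_mem _
      (mul_mem (D.hwb j).1 (mul_mem (D.hMM1 (D.hxb i)) D.he1_mem))
    rw [mul_smul_comm, mul_assoc (D.zb j), mul_assoc (D.zb j), mul_assoc (D.EM _),
      ← mul_assoc Y, mem_B.1 hY _ hm]
    simp only [mul_assoc]
  rw [Finset.sum_congr rfl fun j _ => h2 j, Finset.sum_comm, EB, smul_smul]
  have h3 : D.lam⁻¹ ^ 2 * D.lam = D.lam⁻¹ := by field_simp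
  rw [h3, Finset.smul_sum]
  refine Finset.sum_congr rfl fun i _ => ?_
  rw [← Finset.smul_sum, ← Finset.sum_mul,
    D.hdualA2 _ (mul_mem (D.hMM1 (D.hxb i)) D.he1_mem)]
  simp only [mul_assoc]

end D2

/-! ### Dual bases of the trace on `A`, and its non-degeneracy on `B` -/

namespace D2S

variable {k : Type*} [Field k] {R : Type*} [Ring R] [Algebra k R] (D : D2S k R)

theorem w_mem : D.w ∈ D.V := ⟨D.hw_mem.1, D2.mem_B.2 D.hw_mem.2⟩

theorem winv_mem : D.winv ∈ D.V := ⟨D.hwinv_mem.1, D2.mem_B.2 D.hwinv_mem.2⟩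

theorem f1_mem (t) : D.f1 t ∈ D.V := ⟨(D.hf1 t).1, D2.mem_B.2 (D.hf1 t).2⟩

theorem f2_mem (t) : D.f2 t ∈ D.V := ⟨(D.hf2 t).1, D2.mem_B.2 (D.hf2 t).2⟩

theorem w_comm {v : R} (hv : v ∈ D.V) : D.w * v = v * D.w :=
  D.hw_central v hv.1 (D2.mem_B.1 hv.2)

theorem sum_f2_f1 : ∑ t, D.f2 t * D.f1 t = 1 := by
  have h := congrArg (LinearMap.mul' k R) D.hf_symm
  simp only [map_sum, LinearMap.mul'_apply] at h
  rw [← h, D.hf_one]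

theorem w_winv_mul (x : R) : D.w * (D.winv * x) = x := by rw [← mul_assoc, D.hw_inv.1, one_mul]

theorem winv_w_mul (x : R) : D.winv * (D.w * x) = x := by rw [← mul_assoc, D.hw_inv.2, one_mul]

/-- The dual bases of `T` on `V`, with the legs of `f` interchanged by its symmetry. -/
theorem dual_V {v : R} (hv : v ∈ D.V) : ∑ t, D.T (v * D.f1 t) • D.f2 t = D.winv * v := by
  have h1 := D.hw_dual (v * D.winv) (mul_mem hv D.winv_mem).1
    (D2.mem_B.1 (mul_mem hv D.winv_mem).2)
  simp only [mul_assoc, D.winv_w_mul] at h1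
  have h := congrArg ((TensorProduct.lid k R : k ⊗[k] R ≃ₗ[k] R).toLinearMap ∘ₗ
    TensorProduct.map (D.T ∘ₗ LinearMap.mulLeft k v) LinearMap.id) D.hf_symm
  simp only [map_sum, LinearMap.comp_apply, TensorProduct.map_tmul, LinearMap.mulLeft_apply,
    LinearMap.id_apply, LinearEquiv.coe_coe, TensorProduct.lid_tmul] at h
  rw [h, h1]
  calc v * D.winv = D.winv * (D.w * v) * D.winv := by rw [D.winv_w_mul]
    _ = D.winv * v * (D.w * D.winv) := by rw [D.w_comm hv]; simp only [mul_assoc]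
    _ = _ := by rw [D.hw_inv.1, mul_one]

/-- `γⱼ f⁽¹⁾ ⊗ w f⁽²⁾ δⱼ` is the dual bases tensor of `T` on `A` (here with `w` cancelled). -/
theorem dual_A1 {a : R} (ha : a ∈ D.A) :
    ∑ j, ∑ t, D.T (a * (D.gam j * D.f1 t)) • (D.f2 t * D.del j) = D.winv * a := by
  conv_rhs => rw [← D.sum_EB_gam_del ha, Finset.mul_sum]
  refine Finset.sum_congr rfl fun j _ => ?_
  rw [← mul_assoc, ← D.dual_V (D.EB_mem_V (mul_mem ha (D.gam_mem j))), Finset.sum_mul]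
  refine Finset.sum_congr rfl fun t _ => ?_
  rw [D.T_EB _ (D.f1_mem t).2, smul_mul_assoc, mul_assoc a]

/-- The dual bases of `T` on `U`, transported from `V` by `v ↦ v̂`, which preserves `T`. -/
theorem dual_U {u : R} (hu : u ∈ D.U) :
    ∑ t, D.T (D.hat (D.f2 t) * D.hat D.w * u) • D.hat (D.f1 t) = u := by
  have hv := D.unhat_mem hu
  have h := congrArg D.hat (D.hw_dual _ hv.1 (D2.mem_B.1 hv.2))
  rw [D.hat_unhat hu] at h
  conv_rhs => rw [← h]
  have hs : ∀ c : Fin D.nV → k, D.hat (∑ t, c t • D.f1 t) = ∑ t, c t • D.hat (D.f1 t) := by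
    intro c
    simp only [D2.hat, Finset.sum_mul, map_sum, smul_mul_assoc, map_smul, Finset.smul_sum,
      smul_comm (D.lam⁻¹)]
  rw [hs]
  refine Finset.sum_congr rfl fun t _ => ?_
  rw [← D.T_hat (mul_mem hv (mul_mem D.w_mem (D.f2_mem t))),
    D.hat_mul hv (mul_mem D.w_mem (D.f2_mem t)), D.hat_mul D.w_mem (D.f2_mem t), D.hat_unhat hu]

theorem zb_mem (j) : D.zb j ∈ D.A := ⟨(D.hzb j).1, D2.mem_C.2 (D.hzb j).2⟩

theorem wb_mem (j) : D.wb j ∈ D.A := ⟨(D.hwb j).1, D2.mem_C.2 (D.hwb j).2⟩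

/-- A second form of the dual bases tensor of `T` on `A`, through the dual bases of
`E_M : A → U` and those of `T` on `U`. -/
theorem dual_A2 {a : R} (ha : a ∈ D.A) :
    ∑ j, ∑ t, D.T (D.hat (D.f2 t) * D.hat D.w * D.wb j * a) • (D.zb j * D.hat (D.f1 t)) = a := by
  conv_rhs => rw [← D.hdualA2 a ha.1]
  refine Finset.sum_congr rfl fun j _ => ?_
  have hwa := mul_mem (D.wb_mem j) ha
  conv_rhs => rw [← D.dual_U (D.EM_mem_U hwa), Finset.mul_sum]
  refine Finset.sum_congr rfl fun t _ => ?_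
  have hm := mul_mem (D.hat_mem (D.f2_mem t)).1 (D.hat_mem D.w_mem).1
  rw [mul_smul_comm, ← D.hEM_left _ hm _ hwa.1, D.hTEM _ (mul_mem (D.hMM1 hm) hwa.1), ← mul_assoc]

theorem sum_hat_f1_f2 : ∑ t, D.hat (D.f1 t) * D.hat (D.f2 t) = 1 := by
  rw [← D.hat_one, ← D.sum_f2_f1]
  simp only [← D.hat_mul (D.f2_mem _) (D.f1_mem _)]
  simp only [D2.hat, Finset.sum_mul, map_sum, Finset.smul_sum]

/-- The trace is non-degenerate on `B`, since it is so on `V` and `E_{M₁} : B → V` has dual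
bases in `B`. -/
theorem T_nondeg {b : R} (hb : b ∈ D.B) (h : ∀ X ∈ D.B, D.T (X * b) = 0) : b = 0 := by
  have h1 : ∀ X ∈ D.B, D.EM1 (X * b) = 0 := by
    intro X hX
    have hv := D.EM1_mem_V (mul_mem hX hb)
    have h2 := D.hw_dual _ hv.1 (D2.mem_B.1 hv.2)
    rw [← h2]
    refine Finset.sum_eq_zero fun t _ => ?_
    have hf := mul_mem D.w_mem (D.f2_mem t)
    rw [D.T_EM1_mul hf.1, D.hT_tr, ← mul_assoc, h _ (mul_mem hf.2 hX), zero_smul]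
  rw [← D.hdualB2 b]
  refine Finset.sum_eq_zero fun i _ => ?_
  rw [h1 _ (D.vb_mem i), mul_zero]

theorem hat_w_winv : D.hat D.w * D.hat D.winv = 1 := by
  rw [← D.hat_mul D.winv_mem D.w_mem, D.hw_inv.2, D.hat_one]

theorem U_comm_B {u Y : R} (hu : u ∈ D.U) (hY : Y ∈ D.B) : Y * u = u * Y :=
  D2.mem_B.1 hY u hu.1

theorem hat_winv_f2_w (t) : D.hat D.winv * D.hat (D.f2 t) * D.hat D.w = D.hat (D.f2 t) := by
  rw [← D.hat_mul (D.f2_mem t) D.winv_mem, ← D.hat_mul D.w_mem (mul_mem (D.f2_mem t) D.winv_mem),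
    ← mul_assoc, D.w_comm (D.f2_mem t), mul_assoc, D.hw_inv.1, mul_one]

/-- Next to `e₁` the elements `w` and `w⁻¹` may be replaced by their images in `U`, which commute
with `Y ∈ B` and cancel. -/
theorem e1_w_Y_winv_e1 {Y : R} (hY : Y ∈ D.B) :
    D.e1 * D.w * Y * D.winv * D.e1 = D.e1 * Y * D.e1 := by
  have hr := D.hat_mem D.winv_mem
  calc D.e1 * D.w * Y * D.winv * D.e1
      = (D.e1 * D.w) * Y * (D.winv * D.e1) := by simp only [mul_assoc]
    _ = D.e1 * (D.hat D.w * (Y * D.hat D.winv)) * D.e1 := by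
      rw [← D.e1_mul_hat D.w_mem, ← D.hat_mul_e1 D.winv_mem.1]; simp only [mul_assoc]
    _ = _ := by
      rw [D.U_comm_B hr hY, ← mul_assoc (D.hat D.w), D.hat_w_winv, one_mul]

end D2S

/-! ### Functionals on `B` as pairings -/

namespace D2H

variable {k : Type*} [Field k] {R : Type*} [Ring R] [Algebra k R] (D : D2H k R)

theorem S_mem {b : R} (hb : b ∈ D.B) : D.S b ∈ D.B := D2.mem_B.2 (D.hS_mem b (D2.mem_B.1 hb))

/-- `Δ(b)` has a representation with both legs in `B`. -/
theorem exists_repr {b : R} (hb : b ∈ D.B) : ∃ (n : ℕ) (c1 c2 : Fin n → R),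
    (∀ i, c1 i ∈ D.B) ∧ (∀ i, c2 i ∈ D.B) ∧ D.Δ b = ∑ i, c1 i ⊗ₜ[k] c2 i := by
  obtain ⟨n, f, g, h⟩ := (Submodule.mem_span_set' ..).1 (D.hΔ_mem b (D2.mem_B.1 hb))
  choose c1 h1 c2 h2 h3 using fun i => (g i).2
  refine ⟨n, fun i => f i • c1 i, c2, fun i => Subalgebra.smul_mem _ (D2.mem_B.2 (h1 i)) _,
    fun i => D2.mem_B.2 (h2 i), ?_⟩
  rw [← h]
  refine Finset.sum_congr rfl fun i _ => ?_
  rw [h3 i, TensorProduct.smul_tmul']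

theorem pr_sum {ι : Type*} (s : Finset ι) (a : ι → R) (b : R) :
    D.pr (∑ i ∈ s, a i) b = ∑ i ∈ s, D.pr (a i) b := by
  simp only [pr, Finset.sum_mul, map_sum, Finset.mul_sum]

theorem pr_smul (c : k) (a b : R) : D.pr (c • a) b = c * D.pr a b := by
  simp only [pr, smul_mul_assoc, map_smul, smul_eq_mul, mul_left_comm]

/-- The defining property of the comultiplication. -/
theorem pr_mul {b : R} (hb : b ∈ D.B) {n : ℕ} {c1 c2 : Fin n → R}
    (h : D.Δ b = ∑ i, c1 i ⊗ₜ[k] c2 i) {a1 a2 : R} (h1 : a1 ∈ D.A) (h2 : a2 ∈ D.A) :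
    ∑ i, D.pr a1 (c1 i) * D.pr a2 (c2 i) = D.pr (a1 * a2) b :=
  D.hΔ_def a1 h1.1 (D2.mem_C.1 h1.2) a2 h2.1 (D2.mem_C.1 h2.2) b (D2.mem_B.1 hb) n c1 c2 h

theorem T_w_mul_winv_e1 {X : R} (hX : X ∈ D.B) : D.T (D.w * X * D.winv * D.e1) = D.lam * D.T X := by
  rw [D.T_mul_e1 (mul_mem (mul_mem D.w_mem.2 hX) D.winv_mem.2), D.hT_tr, ← mul_assoc,
    D.hw_inv.2, one_mul]

/-- Every functional `T(X ·)` on `B` is represented through the pairing by an explicit element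
of `A`. -/
theorem T_eq_pr {X b : R} (hX : X ∈ D.B) (hb : b ∈ D.B) :
    D.T (X * b) = D.lam⁻¹ * D.pr (D.EM1 (X * D.winv * D.e1 * D.e2)) b := by
  have hl := D.lam_ne
  have h : D.EM1 (X * D.winv * D.e1 * D.e2) * D.e2 * D.e1 * D.w * b
      = (D.lam * D.lam) • (X * D.winv * D.e1 * (D.w * b)) := by
    calc _ = D.lam • (X * D.winv * (D.e1 * D.e2 * D.e1) * (D.w * b)) := by
          rw [D.EM1_mul_e2]; simp only [mul_assoc, smul_mul_assoc]
      _ = _ := by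
        rw [D.hbraid1, mul_smul_comm, smul_mul_assoc, smul_smul]
  have h2 : D.T (X * D.winv * D.e1 * (D.w * b)) = D.lam * D.T (X * b) := by
    rw [D.hT_tr X b, ← D.T_w_mul_winv_e1 (mul_mem hb hX), D.hT_tr]
    simp only [mul_assoc]
  rw [pr, h, map_smul, smul_eq_mul, h2]
  field_simp

theorem EM1_mem {X : R} (hX : X ∈ D.C) : D.EM1 (X * D.winv * D.e1 * D.e2) ∈ D.A :=
  D.EM1_mem_A (mul_mem (mul_mem (mul_mem hX (D.V_le_A D.winv_mem).2) D.e1_mem_C) D.e2_mem_C)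

theorem T_eq_pr_EB {c b : R} (hc : c ∈ D.C) (hb : b ∈ D.B) :
    D.T (c * b) = D.lam⁻¹ * D.pr (D.EM1 (D.EB c * D.winv * D.e1 * D.e2)) b := by
  rw [← D.T_EB c hb, D.T_eq_pr (D.EB_mem hc) hb]

/-- The antipode expressed through the pairing: the functionals `T(S(·) X)` are represented
by explicit elements of `A`. -/
theorem T_S_eq_pr {X b : R} (hX : X ∈ D.B) (hb : b ∈ D.B) :
    D.T (D.S b * X) = D.lam⁻¹ * D.pr (D.winv * D.EM1 (D.e2 * (D.e1 * X))) b := by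
  have hl := D.lam_ne
  have ha : D.winv * D.EM1 (D.e2 * (D.e1 * X)) ∈ D.A := mul_mem (D.V_le_A D.winv_mem)
    (D.EM1_mem_A (mul_mem D.e2_mem_C (mul_mem D.e1_mem_C (D.B_le_C hX))))
  rw [pr, D.hS_def _ ha.1 (D2.mem_C.1 ha.2) b (D2.mem_B.1 hb)]
  have h : D.S b * D.e1 * D.e2 * D.w * (D.winv * D.EM1 (D.e2 * (D.e1 * X)))
      = (D.lam * D.lam) • (D.S b * (D.e1 * X)) := by
    calc _ = D.S b * D.e1 * (D.e2 * D.EM1 (D.e2 * (D.e1 * X))) := by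
          simp only [mul_assoc, D.w_winv_mul]
      _ = D.lam • (D.S b * (D.e1 * D.e2 * D.e1) * X) := by
        rw [D.e2_mul_EM1]; simp only [mul_assoc, mul_smul_comm]
      _ = _ := by
        rw [D.hbraid1, mul_smul_comm, smul_mul_assoc, smul_smul]; simp only [mul_assoc]
  have h2 : D.T (D.S b * (D.e1 * X)) = D.lam * D.T (D.S b * X) := by
    rw [D.hT_tr, mul_assoc, D.T_e1_mul (mul_mem hX (D.S_mem hb)), D.hT_tr]
  rw [h, map_smul, smul_eq_mul, h2]
  field_simp

theorem T_mul_e2 {x : R} (hx : x ∈ D.M1) : D.T (x * D.e2) = D.lam * D.T x := by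
  rw [← D.T_mul_EM1 hx, D.EM1_e2, mul_smul_comm, mul_one, map_smul, smul_eq_mul]

/-! ### Evaluation of `b₍₁₎ S(b₍₂₎)` -/

/-- The elements of `A` representing the functionals on the first leg; they are written with
factors `E_M(…)` in `M`, which commute with `V`. -/
theorem core2_p {X g : R} (hg : g ∈ D.M1) :
    D.EM1 (D.EB (g * (D.e2 * (D.e1 * X))) * D.winv * D.e1 * D.e2)
      = D.lam • ∑ i, D.xb i * g *
          D.EM (D.EM1 (D.e2 * (D.e1 * X)) * D.winv * D.yb i * D.e1) := by
  have hl := D.lam_ne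
  simp only [D2.EB, smul_mul_assoc, Finset.sum_mul, map_smul, map_sum]
  congr 1
  refine Finset.sum_congr rfl fun i _ => ?_
  set a := D.EM1 (D.e2 * (D.e1 * X)) with ha
  have haM : a * D.winv * D.yb i * D.e1 ∈ D.M1 :=
    mul_mem (mul_mem (mul_mem (D.hEM1_mem _) D.winv_mem.1) (D.hMM1 (D.hyb i))) D.he1_mem
  have hxg : D.xb i * g ∈ D.M1 := mul_mem (D.hMM1 (D.hxb i)) hg
  have h : D.xb i * (g * (D.e2 * (D.e1 * X))) * D.yb i * D.winv * D.e1 * D.e2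
      = D.lam⁻¹ • (D.xb i * g * D.e2 * D.EM (a * D.winv * D.yb i * D.e1)) := by
    calc _ = D.xb i * g * (D.e2 * (D.e1 * X)) * (D.yb i * D.winv) * (D.e1 * D.e2) := by
          simp only [mul_assoc]
      _ = D.lam⁻¹ • (D.xb i * g * (D.e2 * (a * D.winv * D.yb i * D.e1) * D.e2)) := by
        rw [D.hPP2' (D.e1 * X), ← ha, ← D2.mem_B.1 D.winv_mem.2 _ (D.hyb i)]
        simp only [mul_assoc, mul_smul_comm, smul_mul_assoc]
      _ = _ := by rw [D.he2_jones _ haM]; simp only [mul_assoc]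
  rw [h, map_smul, D.hEM1_right _ (D.hMM1 (D.hEM_mem _ haM)), D.hEM1_left _ hxg, D.EM1_e2]
  simp only [mul_smul_comm, smul_mul_assoc, mul_one, smul_smul]
  rw [inv_mul_cancel₀ hl, one_smul]

/-- Here the separability element `f` cancels, as its legs commute with `M`, and the dual bases
`γⱼ, δⱼ` collapse to `λ⁻¹ E` on `M`. -/
theorem core2_sum {a : R} (ha : a ∈ D.M1) :
    ∑ j, ∑ t, (D.lam • ∑ i, D.xb i * (D.gam j * D.f1 t) * D.EM (a * D.winv * D.yb i * D.e1))
      * (D.f2 t * D.del j) = ∑ i, D.xb i * D.E (D.EM (a * D.winv * D.yb i * D.e1)) := by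
  have hl := D.lam_ne
  have hm : ∀ i, D.EM (a * D.winv * D.yb i * D.e1) ∈ D.M := fun i => D.hEM_mem _
    (mul_mem (mul_mem (mul_mem ha D.winv_mem.1) (D.hMM1 (D.hyb i))) D.he1_mem)
  have h1 : ∀ j, ∑ t, (D.lam • ∑ i, D.xb i * (D.gam j * D.f1 t) *
      D.EM (a * D.winv * D.yb i * D.e1)) * (D.f2 t * D.del j)
      = D.lam • ∑ i, D.xb i * (D.gam j * D.EM (a * D.winv * D.yb i * D.e1) * D.del j) := by
    intro j
    simp only [smul_mul_assoc, ← Finset.smul_sum, Finset.sum_mul]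
    rw [Finset.sum_comm]
    congr 1
    refine Finset.sum_congr rfl fun i _ => ?_
    set m := D.EM (a * D.winv * D.yb i * D.e1)
    have h2 : ∀ t, D.xb i * (D.gam j * D.f1 t) * m * (D.f2 t * D.del j)
        = D.xb i * (D.gam j * m) * (D.f1 t * D.f2 t) * D.del j := by
      intro t
      have := D2.mem_B.1 (D.f1_mem t).2 m (hm i)
      calc _ = D.xb i * D.gam j * (D.f1 t * m) * (D.f2 t * D.del j) := by simp only [mul_assoc]
        _ = _ := by rw [this]; simp only [mul_assoc]
    rw [Finset.sum_congr rfl fun t _ => h2 t, ← Finset.sum_mul, ← Finset.mul_sum, D.hf_one,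
      mul_one, mul_assoc]
  rw [Finset.sum_congr rfl fun j _ => h1 j, ← Finset.smul_sum, Finset.sum_comm, Finset.smul_sum]
  refine Finset.sum_congr rfl fun i _ => ?_
  rw [← Finset.mul_sum, D.sum_gam_del (hm i), mul_smul_comm, smul_smul, mul_inv_cancel₀ hl,
    one_smul]

/-- The value of the pairing on the element of `M` to which the second Sweedler sum reduces. -/
theorem core2_pr {X b : R} (hX : X ∈ D.B) (hb : b ∈ D.B) :
    D.pr (∑ i, D.xb i * D.E (D.EM (D.EM1 (D.e2 * (D.e1 * X)) * D.winv * D.yb i * D.e1))) b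
      = D.lam * D.T (X * D.EM1 (b * D.e2)) := by
  have hl := D.lam_ne
  have haA : D.EM1 (D.e2 * (D.e1 * X)) ∈ D.A :=
    D.EM1_mem_A (mul_mem D.e2_mem_C (mul_mem D.e1_mem_C (D.B_le_C hX)))
  have haE : ∀ x ∈ D.M1, D.T (x * D.EM1 (D.e2 * (D.e1 * X))) = D.T (x * (D.e2 * (D.e1 * X))) :=
    fun x hx => D.T_mul_EM1 hx _
  set a := D.EM1 (D.e2 * (D.e1 * X)) with ha
  have hy : ∀ i, a * D.winv * D.yb i ∈ D.M1 := fun i =>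
    mul_mem (mul_mem haA.1 D.winv_mem.1) (D.hMM1 (D.hyb i))
  have hm : ∀ i, D.EM (a * D.winv * D.yb i * D.e1) ∈ D.M := fun i => D.hEM_mem _
    (mul_mem (hy i) D.he1_mem)
  set κ := ∑ i, D.xb i * D.E (D.EM (a * D.winv * D.yb i * D.e1)) with hκ
  have hκM : κ ∈ D.M := sum_mem fun i _ => mul_mem (D.hxb i) (D.hNM (D.hE_mem _ (hm i)))
  have hZ : D.EB (D.e1 * a) ∈ D.B := D.EB_mem (mul_mem D.e1_mem_C haA.2)
  -- on `e₁`, the element `κ` acts as an element of `B`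
  have hκ1 : κ * D.e1 = D.EB (D.e1 * a) * D.winv * D.e1 := by
    rw [← D.EB_mul D.winv_mem.2, hκ, D2.EB, Finset.sum_mul, smul_mul_assoc, Finset.sum_mul,
      Finset.smul_sum]
    refine Finset.sum_congr rfl fun i _ => ?_
    have h2 := D.EM_mul_e1 (hy i)
    have h3 := D.he1_jones _ (hm i)
    have h4 := D.he1_jones' _ (hm i)
    calc _ = D.xb i * (D.e1 * (D.EM (a * D.winv * D.yb i * D.e1) * D.e1)) := by
          rw [mul_assoc, ← h4, ← h3, mul_assoc]
      _ = _ := by rw [h2]; simp only [mul_assoc, mul_smul_comm]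
  have h5 : D.T (κ * D.e2 * D.e1 * D.w * b) = D.lam * D.T (b * D.e2 * (D.e1 * a)) := by
    have h6 : κ * D.e2 * D.e1 * D.w * b
        = (D.e2 * D.EB (D.e1 * a) * D.winv * D.e1) * (D.w * b) := by
      calc _ = D.e2 * (κ * D.e1) * (D.w * b) := by
            rw [← D.he2_M κ hκM]; simp only [mul_assoc]
        _ = _ := by rw [hκ1]; simp only [mul_assoc]
    have h7 : D.w * b * (D.e2 * D.EB (D.e1 * a) * D.winv) ∈ D.B :=
      mul_mem (mul_mem D.w_mem.2 hb) (mul_mem (mul_mem D.e2_mem_B hZ) D.winv_mem.2)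
    rw [h6, D.hT_tr, ← mul_assoc, D.T_mul_e1 h7, D.hT_tr]
    rw [← D.T_mul_EB _ (mul_mem hb D.e2_mem_B)]
    congr 1
    rw [D.hT_tr (b * D.e2)]
    calc _ = D.T (D.e2 * D.EB (D.e1 * a) * (D.winv * (D.w * b))) := by simp only [mul_assoc]
      _ = D.T (D.e2 * (D.EB (D.e1 * a) * b)) := by rw [D.winv_w_mul, mul_assoc]
      _ = _ := by rw [D.hT_tr, mul_assoc]
  have hv := D.EM1_mem_V (mul_mem hb D.e2_mem_B)
  set v := D.EM1 (b * D.e2) with hvd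
  have h8 : D.T (b * D.e2 * (D.e1 * a)) = D.T (v * (D.e1 * a)) := by
    have h9 : D.T (v * D.e2 * (D.e1 * a)) = D.lam * D.T (v * (D.e1 * a)) := by
      rw [D.hT_tr, ← mul_assoc, D.T_mul_e2 (mul_mem (mul_mem D.he1_mem haA.1) hv.1), D.hT_tr]
    rw [D.hPP2 b, ← hvd, smul_mul_assoc, map_smul, h9, smul_eq_mul, ← mul_assoc,
      inv_mul_cancel₀ hl, one_mul]
  have h10 : D.T (v * (D.e1 * a)) = D.lam ^ 2 * D.T (X * v) := by
    rw [← mul_assoc, haE _ (mul_mem hv.1 D.he1_mem)]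
    have h11 : v * D.e1 * (D.e2 * (D.e1 * X)) = D.lam • (v * D.e1 * X) := by
      calc _ = v * (D.e1 * D.e2 * D.e1) * X := by simp only [mul_assoc]
        _ = _ := by rw [D.hbraid1, mul_smul_comm, smul_mul_assoc]
    rw [h11, map_smul, smul_eq_mul, D.hT_tr, ← mul_assoc, D.T_mul_e1 (mul_mem hX hv.2)]
    ring
  rw [pr, h5, h8, h10]
  field_simp

/-- The second Sweedler sum `b₍₁₎ S(b₍₂₎)`, tested against `X ∈ B`. -/
theorem core2 {X b : R} (hX : X ∈ D.B) (hb : b ∈ D.B) {n : ℕ} {c1 c2 : Fin n → R}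
    (h1 : ∀ i, c1 i ∈ D.B) (h2 : ∀ i, c2 i ∈ D.B) (h : D.Δ b = ∑ i, c1 i ⊗ₜ[k] c2 i) :
    ∑ i, D.T (X * (c1 i * D.S (c2 i))) = D.lam⁻¹ * D.T (X * D.EM1 (b * D.e2)) := by
  have hl := D.lam_ne
  have haA : ∀ Y ∈ D.B, D.EM1 (D.e2 * (D.e1 * Y)) ∈ D.A := fun Y hY =>
    D.EM1_mem_A (mul_mem D.e2_mem_C (mul_mem D.e1_mem_C (D.B_le_C hY)))
  have hg : ∀ j t, D.gam j * D.f1 t ∈ D.A := fun j t =>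
    mul_mem (D.gam_mem j) (D.V_le_A (D.f1_mem t))
  have hd : ∀ j t, D.f2 t * D.del j ∈ D.A := fun j t =>
    mul_mem (D.V_le_A (D.f2_mem t)) (D.del_mem j)
  have hc : ∀ j t, D.gam j * D.f1 t * (D.e2 * (D.e1 * X)) ∈ D.C := fun j t =>
    mul_mem (hg j t).2 (mul_mem D.e2_mem_C (mul_mem D.e1_mem_C (D.B_le_C hX)))
  have hp : ∀ j t, D.EM1 (D.EB (D.gam j * D.f1 t * (D.e2 * (D.e1 * X))) * D.winv * D.e1 * D.e2)
      ∈ D.A := fun j t => D.EM1_mem (D.B_le_C (D.EB_mem (hc j t)))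
  have key : ∀ i, D.T (X * (c1 i * D.S (c2 i))) = ∑ j, ∑ t, D.lam⁻¹ ^ 2 *
      (D.pr (D.EM1 (D.EB (D.gam j * D.f1 t * (D.e2 * (D.e1 * X))) * D.winv * D.e1 * D.e2)) (c1 i)
        * D.pr (D.f2 t * D.del j) (c2 i)) := by
    intro i
    have hXc := mul_mem hX (h1 i)
    rw [← mul_assoc, D.hT_tr, D.T_S_eq_pr hXc (h2 i), ← D.dual_A1 (haA _ hXc)]
    simp only [pr_sum, pr_smul, Finset.mul_sum]
    refine Finset.sum_congr rfl fun j _ => Finset.sum_congr rfl fun t _ => ?_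
    have h3 : D.T (D.EM1 (D.e2 * (D.e1 * (X * c1 i))) * (D.gam j * D.f1 t))
        = D.T (D.gam j * D.f1 t * (D.e2 * (D.e1 * X)) * c1 i) := by
      rw [D.T_EM1_mul (hg j t).1, D.hT_tr]; simp only [mul_assoc]
    rw [h3, D.T_eq_pr_EB (hc j t) (h1 i)]
    ring
  rw [Finset.sum_congr rfl fun i _ => key i, Finset.sum_comm]
  have h4 : ∀ j, ∑ i, ∑ t, D.lam⁻¹ ^ 2 *
      (D.pr (D.EM1 (D.EB (D.gam j * D.f1 t * (D.e2 * (D.e1 * X))) * D.winv * D.e1 * D.e2)) (c1 i)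
        * D.pr (D.f2 t * D.del j) (c2 i)) = D.lam⁻¹ ^ 2 * D.pr (∑ t,
      (D.lam • ∑ i, D.xb i * (D.gam j * D.f1 t) *
        D.EM (D.EM1 (D.e2 * (D.e1 * X)) * D.winv * D.yb i * D.e1)) * (D.f2 t * D.del j)) b := by
    intro j
    rw [Finset.sum_comm, pr_sum, Finset.mul_sum]
    refine Finset.sum_congr rfl fun t _ => ?_
    rw [← Finset.mul_sum, D.pr_mul hb h (hp j t) (hd j t), D.core2_p (hg j t).1]
  rw [Finset.sum_congr rfl fun j _ => h4 j, ← Finset.mul_sum, ← pr_sum,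
    D.core2_sum (haA X hX).1, D.core2_pr hX hb]
  field_simp

/-! ### Evaluation of `S(b₍₁₎) b₍₂₎` -/

/-- The elements of `A` representing the functionals on the second leg; the factor `ŵ` is cancelled
by the `w⁻¹` of `T_eq_pr`. -/
theorem core1_q {Y : R} (hY : Y ∈ D.B) (j t) :
    D.EM1 (D.EB (Y * (D.hat (D.f2 t) * D.hat D.w * D.wb j) * D.e2 * D.e1)
        * D.winv * D.e1 * D.e2)
      = D.lam ^ 2 • (D.hat (D.f2 t) * D.EM1 (Y * D.wb j * D.e2)) := by
  have hf := D.hat_mem (D.f2_mem t)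
  have hw := D.hat_mem D.w_mem
  have hr := D.hat_mem D.winv_mem
  have hc : Y * (D.hat (D.f2 t) * D.hat D.w * D.wb j) * D.e2 ∈ D.C :=
    mul_mem (mul_mem (D.B_le_C hY) (mul_mem (mul_mem hf.2 hw.2) (D.wb_mem j).2)) D.e2_mem_C
  have hG := D.EB_mem (mul_mem hc D.e1_mem_C)
  have h1 := D.EB_mul_e1 hc
  set G := D.EB (Y * (D.hat (D.f2 t) * D.hat D.w * D.wb j) * D.e2 * D.e1)
  have h2 : G * D.winv * D.e1 * D.e2 = D.lam ^ 2 • (D.hat (D.f2 t) * (Y * D.wb j * D.e2)) := by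
    calc _ = (G * D.hat D.winv) * D.e1 * D.e2 := by
          rw [mul_assoc G, ← D.hat_mul_e1 D.winv_mem.1]; simp only [mul_assoc]
      _ = D.hat D.winv * (G * D.e1) * D.e2 := by rw [D.U_comm_B hr hG]; simp only [mul_assoc]
      _ = D.lam • (D.hat D.winv * (Y * (D.hat (D.f2 t) * D.hat D.w) * D.wb j)
            * (D.e2 * D.e1 * D.e2)) := by
        rw [h1]; simp only [mul_assoc, mul_smul_comm, smul_mul_assoc]
      _ = D.lam ^ 2 • ((D.hat D.winv * D.hat (D.f2 t) * D.hat D.w) * (Y * D.wb j * D.e2)) := by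
        rw [D.hbraid2, mul_smul_comm, smul_smul, D.U_comm_B (mul_mem hf hw) hY, sq]
        simp only [mul_assoc]
      _ = _ := by rw [D.hat_winv_f2_w]
  rw [h2, map_smul, D.hEM1_left _ (D.hMM1 hf.1)]

/-- The value of the pairing on the element of `A` to which the first Sweedler sum reduces. -/
theorem core1_pr {Y b : R} (hY : Y ∈ D.B) (hb : b ∈ D.B) :
    D.pr (∑ j, D.winv * D.zb j * D.EM1 (Y * D.wb j * D.e2)) b
      = D.lam⁻¹ ^ 2 * D.T (D.e1 * Y * D.e1 * D.e2 * D.w * b * D.winv) := by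
  have hl := D.lam_ne
  have hc : D.e1 * Y * D.e1 ∈ D.C := mul_mem (mul_mem D.e1_mem_C (D.B_le_C hY)) D.e1_mem_C
  have h1 : (∑ j, D.winv * D.zb j * D.EM1 (Y * D.wb j * D.e2)) * D.e2
      = D.lam⁻¹ • (D.winv * D.EB (D.e1 * Y * D.e1) * D.e2) := by
    have h2 : ∀ j, D.winv * D.zb j * D.EM1 (Y * D.wb j * D.e2) * D.e2
        = D.lam • (D.winv * (D.zb j * Y * D.wb j) * D.e2) := by
      intro j
      rw [mul_assoc _ _ D.e2, D.EM1_mul_e2, mul_smul_comm]; simp only [mul_assoc]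
    rw [Finset.sum_mul, Finset.sum_congr rfl fun j _ => h2 j, ← Finset.smul_sum,
      ← Finset.sum_mul, ← Finset.mul_sum, D.sum_z_w hY]
    simp only [mul_smul_comm, smul_mul_assoc, smul_smul]
    congr 1
    field_simp
  have hG := D.EB_mem hc
  have h3 : D.T (D.winv * D.EB (D.e1 * Y * D.e1) * D.e2 * D.e1 * D.w * b)
      = D.lam * D.T (D.e1 * Y * D.e1 * D.e2 * D.w * b * D.winv) := by
    have h4 : D.w * b * (D.winv * D.EB (D.e1 * Y * D.e1) * D.e2) ∈ D.B :=
      mul_mem (mul_mem D.w_mem.2 hb) (mul_mem (mul_mem D.winv_mem.2 hG) D.e2_mem_B)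
    have h5 : D.e2 * (D.w * b * D.winv) ∈ D.B :=
      mul_mem D.e2_mem_B (mul_mem (mul_mem D.w_mem.2 hb) D.winv_mem.2)
    rw [mul_assoc _ D.w b, D.hT_tr, ← mul_assoc, D.T_mul_e1 h4]
    congr 1
    have h6 := D.T_EB (D.e1 * Y * D.e1) h5
    calc _ = D.T ((D.w * b * D.winv * D.EB (D.e1 * Y * D.e1)) * D.e2) := by
          simp only [mul_assoc]
      _ = D.T (D.EB (D.e1 * Y * D.e1) * (D.e2 * (D.w * b * D.winv))) := by
        rw [D.hT_tr, ← mul_assoc, D.hT_tr]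
      _ = _ := by rw [h6]; simp only [mul_assoc]
  rw [pr, h1]
  simp only [smul_mul_assoc, map_smul, smul_eq_mul]
  rw [h3]
  field_simp

/-- The first Sweedler sum `S(b₍₁₎) b₍₂₎`, tested against `Y ∈ B`. -/
theorem core1 {Y b : R} (hY : Y ∈ D.B) (hb : b ∈ D.B) {n : ℕ} {c1 c2 : Fin n → R}
    (h1 : ∀ i, c1 i ∈ D.B) (h2 : ∀ i, c2 i ∈ D.B) (h : D.Δ b = ∑ i, c1 i ⊗ₜ[k] c2 i) :
    ∑ i, D.T (D.S (c1 i) * (c2 i * Y))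
      = D.lam⁻¹ ^ 2 * D.T (D.e1 * Y * D.e1 * D.e2 * D.w * b * D.winv) := by
  have hl := D.lam_ne
  have hβ : ∀ j t, D.hat (D.f2 t) * D.hat D.w * D.wb j ∈ D.A := fun j t =>
    mul_mem (mul_mem (D.U_le_A (D.hat_mem (D.f2_mem t))) (D.U_le_A (D.hat_mem D.w_mem)))
      (D.wb_mem j)
  have hα : ∀ j t, D.winv * (D.zb j * D.hat (D.f1 t)) ∈ D.A := fun j t =>
    mul_mem (D.V_le_A D.winv_mem) (mul_mem (D.zb_mem j) (D.U_le_A (D.hat_mem (D.f1_mem t))))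
  have hc : ∀ j t, Y * (D.hat (D.f2 t) * D.hat D.w * D.wb j) * D.e2 * D.e1 ∈ D.C := fun j t =>
    mul_mem (mul_mem (mul_mem (D.B_le_C hY) (hβ j t).2) D.e2_mem_C) D.e1_mem_C
  have hq := fun j t => D.EM1_mem (D.B_le_C (D.EB_mem (hc j t)))
  have key : ∀ i, D.T (D.S (c1 i) * (c2 i * Y)) = ∑ j, ∑ t, D.lam⁻¹ ^ 2 *
      (D.pr (D.winv * (D.zb j * D.hat (D.f1 t))) (c1 i) *
        D.pr (D.EM1 (D.EB (Y * (D.hat (D.f2 t) * D.hat D.w * D.wb j) * D.e2 * D.e1)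
          * D.winv * D.e1 * D.e2)) (c2 i)) := by
    intro i
    have hcY := mul_mem (h2 i) hY
    have haA : D.EM1 (D.e2 * (D.e1 * (c2 i * Y))) ∈ D.A :=
      D.EM1_mem_A (mul_mem D.e2_mem_C (mul_mem D.e1_mem_C (D.B_le_C hcY)))
    rw [D.T_S_eq_pr hcY (h1 i)]
    conv_lhs => rw [← D.dual_A2 haA]
    simp only [Finset.mul_sum, mul_smul_comm, pr_sum, pr_smul]
    refine Finset.sum_congr rfl fun j _ => Finset.sum_congr rfl fun t _ => ?_
    have h3 : D.T (D.hat (D.f2 t) * D.hat D.w * D.wb j * D.EM1 (D.e2 * (D.e1 * (c2 i * Y))))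
        = D.T (Y * (D.hat (D.f2 t) * D.hat D.w * D.wb j) * D.e2 * D.e1 * c2 i) := by
      rw [D.T_mul_EM1 (hβ j t).1]
      conv_rhs => rw [mul_assoc, mul_assoc, mul_assoc, D.hT_tr]
      simp only [mul_assoc]
    rw [h3, D.T_eq_pr_EB (hc j t) (h2 i)]
    ring
  rw [Finset.sum_congr rfl fun i _ => key i, Finset.sum_comm, ← D.core1_pr hY hb, pr_sum]
  refine Finset.sum_congr rfl fun j _ => ?_
  rw [Finset.sum_comm]
  have h4 : ∀ t, ∑ i, D.lam⁻¹ ^ 2 *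
      (D.pr (D.winv * (D.zb j * D.hat (D.f1 t))) (c1 i) *
        D.pr (D.EM1 (D.EB (Y * (D.hat (D.f2 t) * D.hat D.w * D.wb j) * D.e2 * D.e1)
          * D.winv * D.e1 * D.e2)) (c2 i))
      = D.pr (D.winv * D.zb j * (D.hat (D.f1 t) * D.hat (D.f2 t)) * D.EM1 (Y * D.wb j * D.e2)) b := by
    intro t
    rw [← Finset.mul_sum, D.pr_mul hb h (hα j t) (hq j t), D.core1_q hY, mul_smul_comm, pr_smul,
      ← mul_assoc, ← mul_pow, inv_mul_cancel₀ hl, one_pow, one_mul]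
    simp only [mul_assoc]
  rw [Finset.sum_congr rfl fun t _ => h4 t, ← pr_sum, ← Finset.sum_mul, ← Finset.mul_sum,
    D.sum_hat_f1_f2, mul_one]

/-! ### Evaluation of the counital maps -/

/-- The source counital map `b ↦ 1₍₁₎ ε(b 1₍₂₎)`, tested against `Y ∈ B`. -/
theorem rhs1 {Y b : R} (hY : Y ∈ D.B) (hb : b ∈ D.B) {n : ℕ} {o1 o2 : Fin n → R}
    (h1 : ∀ i, o1 i ∈ D.B) (h2 : ∀ i, o2 i ∈ D.B) (h : D.Δ 1 = ∑ i, o1 i ⊗ₜ[k] o2 i) :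
    ∑ i, D.eps (b * o2 i) * D.T (Y * o1 i)
      = D.lam⁻¹ ^ 2 * D.T (D.e1 * Y * D.e1 * D.e2 * D.w * b * D.winv) := by
  have hl := D.lam_ne
  have hX : D.e2 * D.w * b ∈ D.B := mul_mem (mul_mem D.e2_mem_B D.w_mem.2) hb
  have hp := D.EM1_mem (D.B_le_C hY)
  have hq := D.EM1_mem (D.B_le_C hX)
  have key : ∀ i, D.eps (b * o2 i) * D.T (Y * o1 i) = D.lam⁻¹ ^ 3 *
      (D.pr (D.EM1 (Y * D.winv * D.e1 * D.e2)) (o1 i) *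
        D.pr (D.EM1 (D.e2 * D.w * b * D.winv * D.e1 * D.e2)) (o2 i)) := by
    intro i
    have h3 : D.T (1 * D.e2 * D.e1 * D.w * (b * o2 i)) = D.lam * D.T (D.e2 * D.w * b * o2 i) := by
      have h4 : D.w * b * o2 i * D.e2 ∈ D.B :=
        mul_mem (mul_mem (mul_mem D.w_mem.2 hb) (h2 i)) D.e2_mem_B
      calc _ = D.T (D.e2 * D.e1 * (D.w * b * o2 i)) := by simp only [mul_assoc, one_mul]
        _ = D.T (D.w * b * o2 i * D.e2 * D.e1) := by rw [D.hT_tr, ← mul_assoc]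
        _ = D.lam * D.T (D.w * b * o2 i * D.e2) := D.T_mul_e1 h4
        _ = _ := by rw [D.hT_tr]; simp only [mul_assoc]
    rw [eps, pr, h3, D.T_eq_pr hX (h2 i), D.T_eq_pr hY (h1 i)]
    field_simp
  rw [Finset.sum_congr rfl fun i _ => key i, ← Finset.mul_sum,
    D.pr_mul (one_mem _) h hp hq, pr]
  have h5 : D.EM1 (Y * D.winv * D.e1 * D.e2) * D.EM1 (D.e2 * D.w * b * D.winv * D.e1 * D.e2) * D.e2
      * D.e1 * D.w * 1 = (D.lam ^ 3) •
        (Y * D.winv * D.e1 * D.e2 * D.w * b * D.winv * D.e1 * D.w) := by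
    calc _ = D.EM1 (Y * D.winv * D.e1 * D.e2) *
          (D.EM1 (D.e2 * D.w * b * D.winv * D.e1 * D.e2) * D.e2) * D.e1 * D.w := by
          simp only [mul_assoc, mul_one]
      _ = D.lam • ((D.EM1 (Y * D.winv * D.e1 * D.e2) * D.e2) * (D.w * b * D.winv) *
          (D.e1 * D.e2 * D.e1) * D.w) := by
        rw [D.EM1_mul_e2 (D.e2 * D.w * b * D.winv * D.e1)]
        simp only [mul_assoc, mul_smul_comm, smul_mul_assoc]
      _ = _ := by
        rw [D.EM1_mul_e2, D.hbraid1]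
        simp only [mul_assoc, mul_smul_comm, smul_mul_assoc, smul_smul]
        congr 1
        ring
  have h6 : D.T (Y * D.winv * D.e1 * D.e2 * D.w * b * D.winv * D.e1 * D.w)
      = D.T (D.e1 * Y * D.e1 * D.e2 * D.w * b * D.winv) := by
    rw [← D.e1_w_Y_winv_e1 hY]
    have h7 : Y * D.winv * D.e1 * D.e2 * D.w * b * D.winv * D.e1 * D.w
      = (Y * D.winv * D.e1 * D.e2 * D.w * b * D.winv) * (D.e1 * D.w) := by simp only [mul_assoc]
    rw [h7, D.hT_tr]
    simp only [mul_assoc]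
  rw [h5, map_smul, smul_eq_mul, h6]
  field_simp

/-- The target counital map `b ↦ ε(1₍₁₎ b) 1₍₂₎`, tested against `Y ∈ B`. -/
theorem rhs2 {Y b : R} (hY : Y ∈ D.B) (hb : b ∈ D.B) {n : ℕ} {o1 o2 : Fin n → R}
    (h2 : ∀ i, o2 i ∈ D.B) (h : D.Δ 1 = ∑ i, o1 i ⊗ₜ[k] o2 i) :
    ∑ i, D.eps (o1 i * b) * D.T (Y * o2 i) = D.lam⁻¹ * D.T (Y * D.EM1 (b * D.e2)) := by
  have hl := D.lam_ne
  have hp := D.EM1_mem (D.B_le_C hY)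
  have hv := D.EM1_mem_V (mul_mem hb D.e2_mem_B)
  have hPP := D.hPP2 b
  set v := D.EM1 (b * D.e2)
  have key : ∀ i, D.eps (o1 i * b) * D.T (Y * o2 i) = D.lam⁻¹ ^ 2 *
      (D.pr v (o1 i) * D.pr (D.EM1 (Y * D.winv * D.e1 * D.e2)) (o2 i)) := by
    intro i
    have h3 : D.T (1 * D.e2 * D.e1 * D.w * (o1 i * b))
        = D.lam⁻¹ * D.T (v * D.e2 * D.e1 * D.w * o1 i) := by
      calc _ = D.T (D.e2 * D.e1 * D.w * o1 i * b) := by simp only [mul_assoc, one_mul]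
        _ = D.T (b * D.e2 * (D.e1 * D.w * o1 i)) := by rw [D.hT_tr]; simp only [mul_assoc]
        _ = _ := by
          rw [hPP, smul_mul_assoc, map_smul, smul_eq_mul]; simp only [mul_assoc]
    have hpr : D.pr v (o1 i) = D.lam⁻¹ ^ 2 * D.T (v * D.e2 * D.e1 * D.w * o1 i) := rfl
    rw [eps, pr, h3, D.T_eq_pr hY (h2 i), hpr]
    ring
  rw [Finset.sum_congr rfl fun i _ => key i, ← Finset.mul_sum,
    D.pr_mul (one_mem _) h (D.V_le_A hv) hp, pr]
  have h5 : v * D.EM1 (Y * D.winv * D.e1 * D.e2) * D.e2 * D.e1 * D.w * 1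
      = (D.lam ^ 2) • (v * Y * D.winv * D.e1 * D.w) := by
    calc _ = v * (D.EM1 (Y * D.winv * D.e1 * D.e2) * D.e2) * D.e1 * D.w := by
          simp only [mul_assoc, mul_one]
      _ = D.lam • (v * (Y * D.winv) * (D.e1 * D.e2 * D.e1) * D.w) := by
        rw [D.EM1_mul_e2]; simp only [mul_assoc, mul_smul_comm, smul_mul_assoc]
      _ = _ := by
        rw [D.hbraid1]
        simp only [mul_assoc, mul_smul_comm, smul_mul_assoc, smul_smul, sq]
  have h6 : D.T (v * Y * D.winv * D.e1 * D.w) = D.lam * D.T (Y * v) := by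
    rw [D.hT_tr Y v, ← D.T_w_mul_winv_e1 (mul_mem hv.2 hY), D.hT_tr]
    simp only [mul_assoc]
  rw [h5, map_smul, smul_eq_mul, h6]
  field_simp

end D2H

open D2 D2H

/-- antipode–counital identities: for all `b ∈ B`, writing
`Δ(1) = 1₍₁₎ ⊗ 1₍₂₎`, one has `S(b₍₁₎) b₍₂₎ = 1₍₁₎ ε(b 1₍₂₎)` and
`b₍₁₎ S(b₍₂₎) = ε(1₍₁₎ b) 1₍₂₎`.  (Sweedler sums are expressed through arbitrary
finite representations of `Δ(b)` and `Δ(1)`.) -/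
theorem stmt13 {k : Type*} [Field k] {R : Type*} [Ring R] [Algebra k R] (D : D2H k R) :
    ∀ b ∈ D2.B D.toD2S.toD2,
    ∀ (m : ℕ) (b1 b2 : Fin m → R), D.Δ b = ∑ i, b1 i ⊗ₜ[k] b2 i →
    ∀ (m0 : ℕ) (o1 o2 : Fin m0 → R), D.Δ 1 = ∑ j, o1 j ⊗ₜ[k] o2 j →
      (∑ i, D.S (b1 i) * b2 i = ∑ j, D.eps (b * o2 j) • o1 j) ∧
      (∑ i, b1 i * D.S (b2 i) = ∑ j, D.eps (o1 j * b) • o2 j) := by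
  intro b hb m b1 b2 hΔ m0 o1 o2 hΔ1
  obtain ⟨n, c1, c2, hc1, hc2, hc⟩ := D.exists_repr hb
  obtain ⟨n0, d1, d2, hd1, hd2, hd⟩ := D.exists_repr (one_mem D.B)
  -- both sides are values of linear maps on `R ⊗ R`, so the given representations may be
  -- replaced by ones with entries in `B`
  have hs : ∀ F : R ⊗[k] R →ₗ[k] R,
      ∑ i, F (b1 i ⊗ₜ[k] b2 i) = ∑ i, F (c1 i ⊗ₜ[k] c2 i) ∧
      ∑ j, F (o1 j ⊗ₜ[k] o2 j) = ∑ j, F (d1 j ⊗ₜ[k] d2 j) := fun F => by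
    simp only [← map_sum, ← hΔ, ← hc, ← hΔ1, ← hd, and_self]
  have hε : ∃ ε' : R →ₗ[k] k, ∀ x, ε' x = D.eps x :=
    ⟨(D.lam⁻¹ ^ 2) • (D.T ∘ₗ LinearMap.mulLeft k (1 * D.e2 * D.e1 * D.w)), fun x => by
      simp only [eps, pr, LinearMap.smul_apply, LinearMap.comp_apply,
        LinearMap.mulLeft_apply, smul_eq_mul]⟩
  obtain ⟨ε', hε'⟩ := hε
  constructor
  · have hL := (hs (LinearMap.mul' k R ∘ₗ TensorProduct.map D.S LinearMap.id)).1
    have hR := (hs ((TensorProduct.rid k R).toLinearMap ∘ₗ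
      TensorProduct.map LinearMap.id (ε' ∘ₗ LinearMap.mulLeft k b))).2
    simp only [LinearMap.comp_apply, TensorProduct.map_tmul, LinearMap.mul'_apply,
      LinearMap.id_apply, LinearEquiv.coe_coe, TensorProduct.rid_tmul, LinearMap.mulLeft_apply,
      hε'] at hL hR
    rw [hL, hR]
    refine sub_eq_zero.1 (D.T_nondeg (sub_mem
      (sum_mem fun i _ => mul_mem (D.S_mem (hc1 i)) (hc2 i))
      (sum_mem fun i _ => Subalgebra.smul_mem _ (hd1 i) _)) fun Y hY => ?_)
    rw [mul_sub, map_sub, sub_eq_zero, D.hT_tr Y]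
    simp only [Finset.mul_sum, Finset.sum_mul, map_sum, mul_smul_comm, map_smul, smul_eq_mul]
    rw [D.rhs1 hY hb hd1 hd2 hd, ← D.core1 hY hb hc1 hc2 hc]
    simp only [mul_assoc]
  · have hL := (hs (LinearMap.mul' k R ∘ₗ TensorProduct.map LinearMap.id D.S)).1
    have hR := (hs ((TensorProduct.lid k R).toLinearMap ∘ₗ
      TensorProduct.map (ε' ∘ₗ LinearMap.mulRight k b) LinearMap.id)).2
    simp only [LinearMap.comp_apply, TensorProduct.map_tmul, LinearMap.mul'_apply,
      LinearMap.id_apply, LinearEquiv.coe_coe, TensorProduct.lid_tmul, LinearMap.mulRight_apply,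
      hε'] at hL hR
    rw [hL, hR]
    refine sub_eq_zero.1 (D.T_nondeg (sub_mem
      (sum_mem fun i _ => mul_mem (hc1 i) (D.S_mem (hc2 i)))
      (sum_mem fun i _ => Subalgebra.smul_mem _ (hd2 i) _)) fun Y hY => ?_)
    rw [mul_sub, map_sub, sub_eq_zero]
    simp only [Finset.mul_sum, map_sum, mul_smul_comm, map_smul, smul_eq_mul]
    rw [D.rhs2 hY hb hd2 hd, ← D.core2 hY hb hc1 hc2 hc]
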